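/- Let A be a unital C*-algebra and let a, v ∈ A satisfy a = v · |a| and v* v · |a| = |a|. Then for every continuous function f : ℝ → ℝ with f(0) = 0, one has v* · f(|a*|) · v = f(|a|) and v · f(|a|) · v* = f(|a*|), where f is applied via continuous functional calculus. -/

import Mathlib

/-!
On the elements `x` with `v* v x = x = x v* v`, conjugation `x ↦ v x v*` is a `*`-homomorphism.
Its graph is a closed `*`-subalgebra of `A × A`, so with the pair `(|a|, v |a| v*)` it also contains
`(f(|a|), f(v |a| v*))`. This gives `v f(|a|) v* = f(v |a| v*)` and `v* v f(|a|) = f(|a|)`, and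
`v |a| v* = |a*|` because it is a positive square root of `a a*`.
-/

section Graph

variable (R : Type*) {A : Type*} [CommSemiring R] [NonUnitalRing A] [StarRing A] [Module R A]
  [IsScalarTower R A A] [SMulCommClass R A A]

/-- The graph of the `*`-homomorphism `x ↦ v x v*`, whose domain is the `*`-subalgebra of all `x`
with `v* v x = x = x v* v`; a pair `(x, y)` of the graph has `y = v x v*`. -/
def starConjGraph (v : A) : NonUnitalStarSubalgebra R (A × A) where
  carrier := {z | star v * v * z.1 = z.1 ∧ z.1 * (star v * v) = z.1 ∧ v * z.1 * star v = z.2}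
  zero_mem' := by simp
  add_mem' := by
    rintro z w ⟨hz, hz', hz''⟩ ⟨hw, hw', hw''⟩
    simp only [Set.mem_ofPred_eq, Prod.fst_add, Prod.snd_add, mul_add, add_mul]
    exact ⟨by rw [hz, hw], by rw [hz', hw'], by rw [hz'', hw'']⟩
  smul_mem' := by
    rintro c z ⟨hz, hz', hz''⟩
    simp only [Set.mem_ofPred_eq, Prod.smul_fst, Prod.smul_snd, mul_smul_comm, smul_mul_assoc]
    exact ⟨by rw [hz], by rw [hz'], by rw [hz'']⟩
  mul_mem' := by
    rintro z w ⟨hz, -, hz''⟩ ⟨hw, hw', hw''⟩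
    refine ⟨by rw [Prod.fst_mul, ← mul_assoc, hz], by rw [Prod.fst_mul, mul_assoc, hw'], ?_⟩
    calc v * (z.1 * w.1) * star v
        = v * (z.1 * (star v * v * w.1)) * star v := by rw [hw]
      _ = (v * z.1 * star v) * (v * w.1 * star v) := by simp only [mul_assoc]
      _ = z.2 * w.2 := by rw [hz'', hw'']
  star_mem' := by
    rintro z ⟨hz, hz', hz''⟩
    refine ⟨?_, ?_, ?_⟩
    · simpa only [Prod.fst_star, star_mul, star_star] using congrArg star hz'
    · simpa only [Prod.fst_star, star_mul, star_star] using congrArg star hz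
    · simpa only [Prod.fst_star, Prod.snd_star, star_mul, star_star, mul_assoc]
        using congrArg star hz''

variable {R}

theorem mk_mem_starConjGraph {v x y : A} :
    (x, y) ∈ starConjGraph R v ↔
      star v * v * x = x ∧ x * (star v * v) = x ∧ v * x * star v = y :=
  Iff.rfl

theorem isClosed_starConjGraph [TopologicalSpace A] [ContinuousMul A] [T2Space A] (v : A) :
    IsClosed (starConjGraph R v : Set (A × A)) :=
  (isClosed_eq (by fun_prop) (by fun_prop)).inter <|
    (isClosed_eq (by fun_prop) (by fun_prop)).inter (isClosed_eq (by fun_prop) (by fun_prop))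

end Graph

theorem mul_eq_left_of_isSelfAdjoint {A : Type*} [Mul A] [StarMul A] {e x : A}
    (he : IsSelfAdjoint e) (hx : IsSelfAdjoint x) (h : e * x = x) : x * e = x := by
  simpa only [star_mul, he.star_eq, hx.star_eq] using congrArg star h

theorem quasispectrum_conj {R A : Type*} [CommRing R] [NonUnitalRing A] [Module R A]
    [IsScalarTower R A A] [SMulCommClass R A A] {u v x : A} (h : u * v * x = x) :
    quasispectrum R (v * x * u) = quasispectrum R x := by
  rw [quasispectrum.mul_comm, ← mul_assoc, h]

section CFC

variable {A : Type*} [NonUnitalCStarAlgebra A]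

theorem cfcₙ_prodMk_mem {B : Type*} [NonUnitalCStarAlgebra B]
    {S : NonUnitalStarSubalgebra ℝ (A × B)} (hS : IsClosed (S : Set (A × B))) {p : A} {q : B}
    (hp : IsSelfAdjoint p) (hq : IsSelfAdjoint q) (hpq : (p, q) ∈ S) {f : ℝ → ℝ}
    (hf : ContinuousOn f (quasispectrum ℝ p ∪ quasispectrum ℝ q)) :
    (cfcₙ f p, cfcₙ f q) ∈ S := by
  have hpq_sa : IsSelfAdjoint (p, q) := Prod.ext hp hq
  rw [← cfcₙ_map_prod (S := ℂ) f p q hf hpq_sa]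
  exact cfcₙ_mem (hs := hS) f hpq

theorem cfcₙ_prodMk_mem_starConjGraph {v p : A} (hp : IsSelfAdjoint p) (hv : star v * v * p = p)
    {f : ℝ → ℝ} (hf : ContinuousOn f (quasispectrum ℝ p)) :
    (cfcₙ f p, cfcₙ f (v * p * star v)) ∈ starConjGraph ℝ v := by
  refine cfcₙ_prodMk_mem (isClosed_starConjGraph v) hp (hp.conjugate v) ?_ ?_
  · exact ⟨hv, mul_eq_left_of_isSelfAdjoint (.star_mul_self v) hp hv, rfl⟩
  · rwa [quasispectrum_conj hv, Set.union_self]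

variable [PartialOrder A] [StarOrderedRing A]

theorem sqrt_mul_mul_star_eq_conj {v p : A} (hp : 0 ≤ p) (hv : star v * v * p = p) :
    CFC.sqrt (v * p * star (v * p)) = v * p * star v := by
  refine CFC.sqrt_unique ?_ (star_right_conjugate_nonneg hp v)
  calc v * p * star v * (v * p * star v)
      = v * p * (star v * v * p) * star v := by simp only [mul_assoc]
    _ = v * p * star (v * p) := by rw [hv, star_mul, hp.isSelfAdjoint.star_eq, mul_assoc (v * p)]

theorem stmt7_general (a v : A) (ha : a = v * CFC.sqrt (star a * a))
    (hv : star v * v * CFC.sqrt (star a * a) = CFC.sqrt (star a * a))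
    (f : ℝ → ℝ) (hf : ContinuousOn f (quasispectrum ℝ (CFC.sqrt (star a * a)))) (_hf0 : f 0 = 0) :
    star v * cfcₙ f (CFC.sqrt (a * star a)) * v = cfcₙ f (CFC.sqrt (star a * a)) ∧
      v * cfcₙ f (CFC.sqrt (star a * a)) * star v = cfcₙ f (CFC.sqrt (a * star a)) := by
  have habs : 0 ≤ CFC.sqrt (star a * a) := CFC.sqrt_nonneg _
  have habs_star : CFC.sqrt (a * star a) = v * CFC.sqrt (star a * a) * star v := by
    simpa only [← ha] using sqrt_mul_mul_star_eq_conj habs hv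
  obtain ⟨hleft, hright, hconj⟩ :=
    mk_mem_starConjGraph.1 (cfcₙ_prodMk_mem_starConjGraph habs.isSelfAdjoint hv hf)
  rw [← habs_star] at hconj
  refine ⟨?_, hconj⟩
  calc star v * cfcₙ f (CFC.sqrt (a * star a)) * v
      = star v * v * cfcₙ f (CFC.sqrt (star a * a)) * (star v * v) := by
        simp only [← hconj, mul_assoc]
    _ = cfcₙ f (CFC.sqrt (star a * a)) := by rw [hleft, hright]

end CFC

/-- Let `A` be a unital C*-algebra and let `a, v ∈ A` satisfy
`a = v·|a|` and `v* v·|a| = |a|` (polar decomposition). Then for every continuous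
`f : ℝ → ℝ` with `f 0 = 0`, one has `v* · f(|a*|) · v = f(|a|)` and
`v · f(|a|) · v* = f(|a*|)`, where `|a| = √(a* a)`, `|a*| = √(a a*)` and `f` is applied
via the continuous functional calculus. -/
theorem stmt7 {A : Type*} [CStarAlgebra A] [PartialOrder A] [StarOrderedRing A]
    (a v : A) (ha : a = v * CFC.sqrt (star a * a))
    (hv : star v * v * CFC.sqrt (star a * a) = CFC.sqrt (star a * a))
    (f : ℝ → ℝ) (hf : Continuous f) (hf0 : f 0 = 0) :
    star v * cfc f (CFC.sqrt (a * star a)) * v = cfc f (CFC.sqrt (star a * a)) ∧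
      v * cfc f (CFC.sqrt (star a * a)) * star v = cfc f (CFC.sqrt (a * star a)) := by
  simpa only [cfcₙ_eq_cfc hf.continuousOn hf0] using
    stmt7_general a v ha hv f hf.continuousOn hf0
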